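/- Assume Δτ > 0, and define the localized periodic approximation of the Green's function ĝ(w, r) = (1/(P†Q†)) ∑_{(s,z) ∈ ℤ²} e^{2πi s w/P†} e^{2πi z r/Q†} G(η_s, ξ_z, Δτ) (an absolutely convergent sum). Let ŵ₀, r̂₀ ∈ ℝ, set w_n = ŵ₀ + nΔw and r_k = r̂₀ + kΔr for integers n, k, and let φ_l and ψ_d be the hat basis functions centered at w_l with half-width Δw and at r_d with half-width Δr, respectively. Then for all integers n, l, k, d, the exact projected weight equals the Fourier series: (1/(ΔwΔr)) ∫_ℝ ∫_ℝ φ_l(w) ψ_d(r) ĝ(w_n − w, r_k − r) dw dr = (1/(P†Q†)) ∑_{(s,z) ∈ ℤ²} e^{2πi s(n−l)/N†} e^{2πi z(k−d)/K†} tg(s, z) G(η_s, ξ_z, Δτ). -/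

import Mathlib

open Real MeasureTheory

noncomputable section

/-- Fourier transform of the jump density `b`. -/
def Bfun (b : ℝ → ℝ) (η : ℝ) : ℂ :=
  ∫ y : ℝ, (b y : ℂ) * Complex.exp (-(2 * (π : ℂ) * Complex.I * η * y))

/-- Fourier symbol `Ψ` of the Green's function. -/
def Psi (σZ σR ρ lam κ : ℝ) (b : ℝ → ℝ) (η ξ : ℝ) : ℂ :=
  ((-(σZ ^ 2 / 2) * (2 * π * η) ^ 2 - ρ * σZ * σR * (2 * π * η) * (2 * π * ξ)
      - σR ^ 2 / 2 * (2 * π * ξ) ^ 2 - lam : ℝ) : ℂ)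
    - ((lam * κ : ℝ) : ℂ) * (2 * (π : ℂ) * Complex.I * η)
    + ((lam : ℝ) : ℂ) * (starRingEnd ℂ) (Bfun b η)

/-- Fourier transform `G(η, ξ, Δτ) = exp(Ψ(η, ξ) Δτ)` of the Green's function. -/
def Gfun (σZ σR ρ lam κ : ℝ) (b : ℝ → ℝ) (Δτ η ξ : ℝ) : ℂ :=
  Complex.exp (Psi σZ σR ρ lam κ b η ξ * Δτ)

/-- `sin² x / x²`, interpreted as `1` at `x = 0`. -/
def sinc2 (x : ℝ) : ℝ := if x = 0 then 1 else Real.sin x ^ 2 / x ^ 2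

/-- Trigonometric factor `tg(s, z)`. -/
def tg (Nd Kd : ℕ) (s z : ℤ) : ℝ := sinc2 (π * s / Nd) * sinc2 (π * z / Kd)

/-- Piecewise linear ('hat') basis function with half-width `Δ`, centered at `c`. -/
def hat (Δ c w : ℝ) : ℝ :=
  if c ≤ w ∧ w ≤ c + Δ then (c + Δ - w) / Δ
  else if c - Δ ≤ w ∧ w ≤ c then (w - (c - Δ)) / Δ
  else 0

/-- Localized periodic approximation `ĝ(w, r)` of the Green's function. -/
def ghat (σZ σR ρ lam κ : ℝ) (b : ℝ → ℝ) (Pd Qd Δτ : ℝ) (w r : ℝ) : ℂ :=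
  (1 / ((Pd : ℂ) * Qd)) *
    ∑' sz : ℤ × ℤ,
      Complex.exp (2 * (π : ℂ) * Complex.I * sz.1 * w / Pd) *
        Complex.exp (2 * (π : ℂ) * Complex.I * sz.2 * r / Qd) *
        Gfun σZ σR ρ lam κ b Δτ (sz.1 / Pd) (sz.2 / Qd)

/-!
The sum of absolute values of the coefficients `G(η_s, ξ_z, Δτ)` is finite, because `|ρ| < 1` makes
the Gaussian part of the symbol negative definite while the jump part has bounded real part. So the
Fourier series may be integrated term by term, and each term factors into two one-dimensional
integrals of a hat function against a character. Folding the hat function about its centre turns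
such an integral into `∫₀¹ (1 - t) cos (2θt) dt = sinc² θ / 2`.
-/

section

open scoped FourierTransform

section Interchange

variable {ι α β 𝕜 : Type*} [Countable ι] [RCLike 𝕜] [MeasurableSpace α] [MeasurableSpace β]
  {μ : Measure α} {ν : Measure β}

lemma integral_mul_tsum_of_norm_le_one {f : α → 𝕜} (hf : Integrable f μ) {u : ι → α → 𝕜}
    (hu : ∀ i, AEStronglyMeasurable (u i) μ) (hu_le : ∀ i x, ‖u i x‖ ≤ 1)
    {a : ι → 𝕜} (ha : Summable a) :
    ∫ x, f x * ∑' i, u i x * a i ∂μ = ∑' i, (∫ x, f x * u i x ∂μ) * a i := by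
  have hfu (i : ι) : Integrable (fun x ↦ f x * u i x) μ :=
    hf.mul_bdd (hu i) (.of_forall (hu_le i))
  have hsum : Summable fun i ↦ ∫ x, ‖f x * u i x * a i‖ ∂μ := by
    refine .of_nonneg_of_le (fun i ↦ integral_nonneg fun x ↦ norm_nonneg _) (fun i ↦ ?_)
      (ha.norm.mul_left (∫ x, ‖f x‖ ∂μ))
    rw [← integral_mul_const]
    refine integral_mono ((hfu i).mul_const _).norm (hf.norm.mul_const _) fun x ↦ ?_
    simp only [norm_mul]
    gcongr
    exact mul_le_of_le_one_right (norm_nonneg _) (hu_le i x)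
  simp_rw [← integral_mul_const, ← tsum_mul_left, ← mul_assoc]
  exact (integral_tsum_of_summable_integral_norm (fun i ↦ (hfu i).mul_const _) hsum).symm

lemma integral_integral_mul_tsum_of_norm_le_one {f : α → 𝕜} {g : β → 𝕜}
    (hf : Integrable f μ) (hg : Integrable g ν) {u : ι → α → 𝕜} {v : ι → β → 𝕜}
    (hu : ∀ i, AEStronglyMeasurable (u i) μ) (hu_le : ∀ i x, ‖u i x‖ ≤ 1)
    (hv : ∀ i, AEStronglyMeasurable (v i) ν) (hv_le : ∀ i y, ‖v i y‖ ≤ 1)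
    {a : ι → 𝕜} (ha : Summable a) :
    ∫ x, ∫ y, f x * g y * ∑' i, u i x * v i y * a i ∂ν ∂μ =
      ∑' i, (∫ x, f x * u i x ∂μ) * (∫ y, g y * v i y ∂ν) * a i := by
  have hua (x : α) : Summable fun i ↦ u i x * a i :=
    .of_norm_bounded ha.norm fun i ↦ by
      rw [norm_mul]
      exact mul_le_of_le_one_left (norm_nonneg _) (hu_le i x)
  have hga : Summable fun i ↦ (∫ y, g y * v i y ∂ν) * a i := by
    refine .of_norm_bounded (ha.norm.mul_left (∫ y, ‖g y‖ ∂ν)) fun i ↦ ?_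
    rw [norm_mul]
    gcongr
    refine norm_integral_le_of_norm_le hg.norm (.of_forall fun y ↦ ?_)
    rw [norm_mul]
    exact mul_le_of_le_one_right (norm_nonneg _) (hv_le i y)
  have hinner (x : α) : ∫ y, f x * g y * ∑' i, u i x * v i y * a i ∂ν =
      f x * ∑' i, u i x * ((∫ y, g y * v i y ∂ν) * a i) := by
    simp_rw [mul_assoc (f x), integral_const_mul, mul_comm (u _ x) (v _ _), mul_assoc (v _ _),
      integral_mul_tsum_of_norm_le_one hg hv hv_le (hua x), mul_left_comm (u _ x)]
  simp_rw [hinner, integral_mul_tsum_of_norm_le_one hf hu hu_le hga, mul_assoc]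

end Interchange

section Hat

variable {Δ : ℝ}

lemma hat_eq_max (hΔ : 0 < Δ) (c w : ℝ) : hat Δ c w = max 0 (1 - |w - c| / Δ) := by
  rw [hat]
  split_ifs with hright hleft
  · rw [abs_of_nonneg (by linarith), max_eq_right (by rw [sub_nonneg, div_le_one hΔ]; linarith)]
    field_simp
    ring
  · rw [abs_of_nonpos (by linarith), max_eq_right (by rw [sub_nonneg, div_le_one hΔ]; linarith)]
    field_simp
    ring
  · rw [max_eq_left]
    rw [sub_nonpos, one_le_div hΔ, le_abs]
    grind

lemma hat_add_mul (hΔ : 0 < Δ) (c t : ℝ) : hat Δ c (c + Δ * t) = max 0 (1 - |t|) := by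
  rw [hat_eq_max hΔ, add_sub_cancel_left, abs_mul, abs_of_pos hΔ, mul_div_cancel_left₀ _ hΔ.ne']

lemma continuous_hat (hΔ : 0 < Δ) (c : ℝ) : Continuous (hat Δ c) := by
  rw [funext (hat_eq_max hΔ c)]
  fun_prop

lemma hat_eq_zero_of_notMem_Ioc (hΔ : 0 < Δ) {c w : ℝ} (hw : w ∉ Set.Ioc (c - Δ) (c + Δ)) :
    hat Δ c w = 0 := by
  rw [hat_eq_max hΔ, max_eq_left]
  rw [sub_nonpos, one_le_div hΔ, le_abs]
  grind

lemma integrable_hat (hΔ : 0 < Δ) (c : ℝ) : Integrable (hat Δ c) :=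
  (continuous_hat hΔ c).integrable_of_hasCompactSupport <|
    .intro isCompact_Icc fun _ hw ↦
      hat_eq_zero_of_notMem_Ioc hΔ fun h ↦ hw (Set.Ioc_subset_Icc_self h)

variable {F : Type*} [NormedAddCommGroup F] [NormedSpace ℝ F]

lemma integral_hat_smul_eq_intervalIntegral (hΔ : 0 < Δ) (c : ℝ) (E : ℝ → F) :
    ∫ w, hat Δ c w • E w = ∫ w in c - Δ..c + Δ, hat Δ c w • E w := by
  rw [intervalIntegral.integral_of_le (by linarith),
    setIntegral_eq_integral_of_forall_compl_eq_zero fun w hw ↦ by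
      rw [hat_eq_zero_of_notMem_Ioc hΔ hw, zero_smul]]

lemma integral_hat_smul (hΔ : 0 < Δ) (c : ℝ) {E : ℝ → F} (hE : Continuous E) :
    ∫ w, hat Δ c w • E w = Δ • ∫ t in 0..1, (1 - t) • (E (c + Δ * t) + E (c - Δ * t)) := by
  have hcont : Continuous fun w ↦ hat Δ c w • E w := (continuous_hat hΔ c).smul hE
  have hat_add {t : ℝ} (ht : t ∈ Set.uIcc 0 1) : hat Δ c (c + Δ * t) = 1 - t := by
    rw [Set.uIcc_of_le zero_le_one] at ht
    rw [hat_add_mul hΔ, abs_of_nonneg ht.1, max_eq_right (sub_nonneg.2 ht.2)]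
  have hat_sub {t : ℝ} (ht : t ∈ Set.uIcc 0 1) : hat Δ c (c - Δ * t) = 1 - t := by
    rw [← hat_add ht, sub_eq_add_neg, ← mul_neg, hat_add_mul hΔ, hat_add_mul hΔ, abs_neg]
  have hright : ∫ w in c..c + Δ, hat Δ c w • E w = Δ • ∫ t in 0..1, (1 - t) • E (c + Δ * t) := by
    have h := intervalIntegral.smul_integral_comp_add_mul (a := 0) (b := 1)
      (fun w ↦ hat Δ c w • E w) Δ c
    rw [mul_zero, mul_one, add_zero] at h
    rw [← h]
    congr 1
    exact intervalIntegral.integral_congr fun t ht ↦ by simp only [hat_add ht]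
  have hleft : ∫ w in c - Δ..c, hat Δ c w • E w = Δ • ∫ t in 0..1, (1 - t) • E (c - Δ * t) := by
    have h := intervalIntegral.smul_integral_comp_sub_mul (a := 0) (b := 1)
      (fun w ↦ hat Δ c w • E w) Δ c
    rw [mul_zero, mul_one, sub_zero] at h
    rw [← h]
    congr 1
    exact intervalIntegral.integral_congr fun t ht ↦ by simp only [hat_sub ht]
  calc ∫ w, hat Δ c w • E w
      = (∫ w in c..c + Δ, hat Δ c w • E w) + ∫ w in c - Δ..c, hat Δ c w • E w := by
        rw [integral_hat_smul_eq_intervalIntegral hΔ, add_comm (∫ w in c..c + Δ, _),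
          intervalIntegral.integral_add_adjacent_intervals
            (hcont.intervalIntegrable _ _) (hcont.intervalIntegrable _ _)]
    _ = Δ • ∫ t in 0..1, (1 - t) • (E (c + Δ * t) + E (c - Δ * t)) := by
        rw [hright, hleft, ← smul_add, ← intervalIntegral.integral_add
          (Continuous.intervalIntegrable (by fun_prop) _ _)
          (Continuous.intervalIntegrable (by fun_prop) _ _)]
        simp_rw [smul_add]

lemma integral_one_sub_mul_cos (θ : ℝ) :
    ∫ t in 0..1, (1 - t) * cos (2 * θ * t) = sinc2 θ / 2 := by
  rcases eq_or_ne θ 0 with rfl | hθ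
  · norm_num [sinc2, intervalIntegral.integral_comp_sub_left fun t : ℝ ↦ t]
  have hderiv (t : ℝ) : HasDerivAt
      (fun t ↦ (1 - t) * sin (2 * θ * t) / (2 * θ) - cos (2 * θ * t) / (2 * θ) ^ 2)
      ((1 - t) * cos (2 * θ * t)) t := by
    have hlin : HasDerivAt (fun t ↦ 2 * θ * t) (2 * θ) t := by
      simpa only [mul_one] using (hasDerivAt_id' t).const_mul (2 * θ)
    refine HasDerivAt.congr_deriv (((((hasDerivAt_id' t).const_sub 1).mul hlin.sin).div_const
      (2 * θ)).sub (hlin.cos.div_const ((2 * θ) ^ 2))) ?_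
    field_simp
    ring
  rw [intervalIntegral.integral_eq_sub_of_hasDerivAt (fun t _ ↦ hderiv t)
    (Continuous.intervalIntegrable (by fun_prop) _ _), sinc2, if_neg hθ, mul_one, cos_two_mul,
    cos_sq']
  simp only [mul_zero, sin_zero, cos_zero]
  field_simp
  ring

lemma integral_hat_mul_fourierChar (hΔ : 0 < Δ) (c x η : ℝ) :
    ∫ w, (hat Δ c w : ℂ) * 𝐞 (η * (x - w)) = Δ * (𝐞 (η * (x - c)) * sinc2 (π * η * Δ)) := by
  have hfold (t : ℝ) : (𝐞 (η * (x - (c + Δ * t))) : ℂ) + 𝐞 (η * (x - (c - Δ * t))) =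
      𝐞 (η * (x - c)) * (2 * cos (2 * (π * η * Δ) * t) : ℝ) := by
    simp only [Real.fourierChar_apply]
    push_cast
    rw [Complex.two_cos, mul_add, ← Complex.exp_add, ← Complex.exp_add, add_comm]
    congr 2 <;> ring
  have hfourier := integral_hat_smul hΔ c (E := fun w ↦ (𝐞 (η * (x - w)) : ℂ)) (by fun_prop)
  simp only [Complex.real_smul, hfold] at hfourier
  have hterm (t : ℝ) : ((1 - t : ℝ) : ℂ) * (𝐞 (η * (x - c)) * (2 * cos (2 * (π * η * Δ) * t) : ℝ)) =
      2 * 𝐞 (η * (x - c)) * ((1 - t) * cos (2 * (π * η * Δ) * t) : ℝ) := by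
    push_cast
    ring
  simp_rw [hfourier, hterm, intervalIntegral.integral_const_mul, intervalIntegral.integral_ofReal,
    integral_one_sub_mul_cos]
  push_cast
  ring

theorem integral_integral_hat_mul_fourierSeries {ι : Type*} [Countable ι] {Δ' : ℝ} (hΔ : 0 < Δ)
    (hΔ' : 0 < Δ') (c x c' y : ℝ) (η ξ : ι → ℝ) {a : ι → ℂ} (ha : Summable a) :
    ∫ w, ∫ r, (hat Δ c w : ℂ) * hat Δ' c' r *
        ∑' i, (𝐞 (η i * (x - w)) : ℂ) * 𝐞 (ξ i * (y - r)) * a i =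
      Δ * Δ' * ∑' i, (𝐞 (η i * (x - c)) : ℂ) * 𝐞 (ξ i * (y - c')) *
        (sinc2 (π * η i * Δ) * sinc2 (π * ξ i * Δ') : ℝ) * a i := by
  have hφ : Integrable fun w ↦ (hat Δ c w : ℂ) := (integrable_hat hΔ c).ofReal
  have hψ : Integrable fun r ↦ (hat Δ' c' r : ℂ) := (integrable_hat hΔ' c').ofReal
  rw [integral_integral_mul_tsum_of_norm_le_one hφ hψ
    (fun i ↦ Continuous.aestronglyMeasurable (by fun_prop)) (fun i w ↦ (Circle.norm_coe _).le)
    (fun i ↦ Continuous.aestronglyMeasurable (by fun_prop)) (fun i r ↦ (Circle.norm_coe _).le) ha,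
    ← tsum_mul_left]
  simp_rw [integral_hat_mul_fourierChar hΔ, integral_hat_mul_fourierChar hΔ']
  refine tsum_congr fun i ↦ ?_
  push_cast
  ring

end Hat

section Symbol

lemma summable_exp_neg_mul_sq_int {α : ℝ} (hα : 0 < α) :
    Summable fun n : ℤ ↦ exp (-α * (n : ℝ) ^ 2) := by
  have htheta : Summable (jacobiTheta₂_term · 0 ((α / π : ℝ) * Complex.I)) := by
    rw [summable_jacobiTheta₂_term_iff, Complex.im_ofReal_mul, Complex.I_im]
    positivity
  refine htheta.norm.congr fun n ↦ ?_
  rw [norm_jacobiTheta₂_term, Complex.im_ofReal_mul, Complex.I_im, Complex.zero_im]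
  congr 1
  field_simp
  ring

lemma one_sub_abs_mul_sq_add_sq_le (ρ x y : ℝ) :
    (1 - |ρ|) / 2 * (x ^ 2 + y ^ 2) ≤ x ^ 2 / 2 + ρ * x * y + y ^ 2 / 2 := by
  have hcross : -(ρ * x * y) ≤ |ρ| * (|x| * |y|) := by
    rw [← abs_mul, ← abs_mul, ← mul_assoc]
    exact neg_le_abs _
  have hamgm : 2 * |x| * |y| ≤ x ^ 2 + y ^ 2 := by
    simpa only [sq_abs] using two_mul_le_add_sq |x| |y|
  linarith [mul_le_mul_of_nonneg_left hamgm (abs_nonneg ρ)]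

variable (σZ σR ρ lam κ : ℝ) (b : ℝ → ℝ) {Δτ P Q : ℝ}

lemma norm_Bfun_le (η : ℝ) : ‖Bfun b η‖ ≤ ∫ y, |b y| := by
  refine (norm_integral_le_integral_norm _).trans_eq (integral_congr_ae (.of_forall fun y ↦ ?_))
  simp [Complex.norm_exp]

lemma re_Psi_le (η ξ : ℝ) :
    (Psi σZ σR ρ lam κ b η ξ).re ≤ |lam| * (1 + ∫ y, |b y|) -
      (1 - |ρ|) / 2 * ((2 * π * σZ * η) ^ 2 + (2 * π * σR * ξ) ^ 2) := by
  have hre : (Psi σZ σR ρ lam κ b η ξ).re =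
      -(σZ ^ 2 / 2) * (2 * π * η) ^ 2 - ρ * σZ * σR * (2 * π * η) * (2 * π * ξ)
        - σR ^ 2 / 2 * (2 * π * ξ) ^ 2 - lam + lam * (Bfun b η).re := by
    rw [Psi, Complex.add_re, Complex.sub_re, Complex.ofReal_re, Complex.re_ofReal_mul,
      Complex.re_ofReal_mul, Complex.conj_re]
    simp
  have hjump : lam * (Bfun b η).re ≤ |lam| * ∫ y, |b y| := by
    refine (le_abs_self _).trans ?_
    rw [abs_mul]
    gcongr
    exact (Complex.abs_re_le_norm _).trans (norm_Bfun_le b η)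
  linarith [one_sub_abs_mul_sq_add_sq_le ρ (2 * π * σZ * η) (2 * π * σR * ξ), neg_le_abs lam]

lemma norm_Gfun_le (hΔτ : 0 ≤ Δτ) (η ξ : ℝ) :
    ‖Gfun σZ σR ρ lam κ b Δτ η ξ‖ ≤ exp (|lam| * (1 + ∫ y, |b y|) * Δτ) *
      (exp (-((1 - |ρ|) / 2 * Δτ * (2 * π * σZ) ^ 2) * η ^ 2) *
        exp (-((1 - |ρ|) / 2 * Δτ * (2 * π * σR) ^ 2) * ξ ^ 2)) := by
  rw [Gfun, Complex.norm_exp, ← exp_add, ← exp_add, exp_le_exp, Complex.re_mul_ofReal]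
  refine (mul_le_mul_of_nonneg_right (re_Psi_le σZ σR ρ lam κ b η ξ) hΔτ).trans_eq ?_
  ring

lemma summable_Gfun (hσZ : σZ ≠ 0) (hσR : σR ≠ 0) (hρ : |ρ| < 1) (hΔτ : 0 < Δτ)
    (hP : P ≠ 0) (hQ : Q ≠ 0) :
    Summable fun sz : ℤ × ℤ ↦ Gfun σZ σR ρ lam κ b Δτ (sz.1 / P) (sz.2 / Q) := by
  have : 0 < 1 - |ρ| := sub_pos.2 hρ
  have hgauss {σ L : ℝ} (hσ : σ ≠ 0) (hL : L ≠ 0) : Summable fun s : ℤ ↦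
      exp (-((1 - |ρ|) / 2 * Δτ * (2 * π * σ) ^ 2) * (s / L) ^ 2) := by
    refine (summable_exp_neg_mul_sq_int
      (α := (1 - |ρ|) / 2 * Δτ * (2 * π * σ) ^ 2 / L ^ 2) (by positivity)).congr fun s ↦ ?_
    congr 1
    ring
  exact .of_norm_bounded (((hgauss hσZ hP).mul_of_nonneg (hgauss hσR hQ)
    (fun _ ↦ (exp_pos _).le) (fun _ ↦ (exp_pos _).le)).mul_left _)
    fun sz ↦ norm_Gfun_le σZ σR ρ lam κ b hΔτ.le _ _

end Symbol

lemma exp_two_pi_mul_I_div_eq_fourierChar (s : ℤ) (x L : ℝ) :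
    Complex.exp (2 * (π : ℂ) * Complex.I * s * x / L) = 𝐞 (s / L * x) := by
  rw [Real.fourierChar_apply]
  congr 1
  push_cast
  ring

lemma ghat_eq_tsum_fourierChar (σZ σR ρ lam κ : ℝ) (b : ℝ → ℝ) (P Q Δτ w r : ℝ) :
    ghat σZ σR ρ lam κ b P Q Δτ w r = 1 / ((P : ℂ) * Q) * ∑' sz : ℤ × ℤ,
      (𝐞 (sz.1 / P * w) : ℂ) * 𝐞 (sz.2 / Q * r) *
        Gfun σZ σR ρ lam κ b Δτ (sz.1 / P) (sz.2 / Q) := by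
  simp only [ghat, exp_two_pi_mul_I_div_eq_fourierChar]

theorem projected_weight_eq_fourier_series_general
    (σZ σR ρ lam κ P Q Δτ : ℝ) (b : ℝ → ℝ) (hσZ : σZ ≠ 0) (hσR : σR ≠ 0) (hρ : |ρ| < 1)
    (_hbint : Integrable b) (hP : P ≠ 0) (hQ : Q ≠ 0) (hΔτ : 0 < Δτ)
    {Δw Δr : ℝ} (hΔw : 0 < Δw) (hΔr : 0 < Δr) (c x c' y : ℝ) :
    ((1 / (Δw * Δr) : ℝ) : ℂ) *
        ∫ w : ℝ, ∫ r : ℝ, (hat Δw c w : ℂ) * hat Δr c' r *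
          ghat σZ σR ρ lam κ b P Q Δτ (x - w) (y - r) =
      1 / ((P : ℂ) * Q) * ∑' sz : ℤ × ℤ,
        (𝐞 (sz.1 / P * (x - c)) : ℂ) * 𝐞 (sz.2 / Q * (y - c')) *
          (sinc2 (π * (sz.1 / P) * Δw) * sinc2 (π * (sz.2 / Q) * Δr) : ℝ) *
          Gfun σZ σR ρ lam κ b Δτ (sz.1 / P) (sz.2 / Q) := by
  have hΔwr : (Δw * Δr : ℂ) ≠ 0 := mod_cast (mul_pos hΔw hΔr).ne'
  simp_rw [ghat_eq_tsum_fourierChar, mul_left_comm _ (1 / ((P : ℂ) * Q)), integral_const_mul]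
  rw [integral_integral_hat_mul_fourierSeries hΔw hΔr c x c' y (fun sz : ℤ × ℤ ↦ sz.1 / P)
    (fun sz ↦ sz.2 / Q) (summable_Gfun σZ σR ρ lam κ b hσZ hσR hρ hΔτ hP hQ),
    mul_left_comm, Complex.ofReal_div, Complex.ofReal_one, Complex.ofReal_mul,
    ← mul_assoc (1 / (Δw * Δr : ℂ)), one_div_mul_cancel hΔwr, one_mul]

lemma fourierChar_grid_sub {L : ℝ} (hL : L ≠ 0) (N : ℕ) (x₀ : ℝ) (s n l : ℤ) :
    (𝐞 (s / L * (x₀ + n * (L / N) - (x₀ + l * (L / N)))) : ℂ) =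
      Complex.exp (2 * (π : ℂ) * Complex.I * s * (n - l) / N) := by
  have h := exp_two_pi_mul_I_div_eq_fourierChar s (n - l) N
  push_cast at h
  rw [h]
  congr 2
  field_simp
  ring

lemma tg_eq_sinc2_mul_grid {P Q : ℝ} (hP : P ≠ 0) (hQ : Q ≠ 0) (N K : ℕ) (s z : ℤ) :
    tg N K s z = sinc2 (π * (s / P) * (P / N)) * sinc2 (π * (z / Q) * (Q / K)) := by
  rw [tg, mul_assoc, div_mul_div_cancel₀ hP, mul_assoc, div_mul_div_cancel₀ hQ, mul_div_assoc,
    mul_div_assoc]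

end

/-- The exact projected weight of the localized periodic Green's function equals
its Fourier series:
`(1/(ΔwΔr)) ∬ φ_l(w) ψ_d(r) ĝ(w_n − w, r_k − r) dw dr =
(1/(P†Q†)) ∑_{(s,z) ∈ ℤ²} e^{2πi s(n−l)/N†} e^{2πi z(k−d)/K†} tg(s, z) G(η_s, ξ_z, Δτ)`. -/
theorem projected_weight_eq_fourier_series
    (σZ σR ρ lam κ Pd Qd Δτ : ℝ) (b : ℝ → ℝ) (Nd Kd : ℕ)
    (hσZ : 0 < σZ) (hσR : 0 < σR) (hρ : |ρ| < 1) (hlam : 0 ≤ lam)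
    (hb0 : ∀ y, 0 ≤ b y) (hbint : Integrable b) (hb1 : ∫ y : ℝ, b y = 1)
    (hPd : 0 < Pd) (hQd : 0 < Qd)
    (hNd : 0 < Nd) (hNde : Even Nd) (hKd : 0 < Kd) (hKde : Even Kd)
    (hΔτ : 0 < Δτ)
    (Δw Δr : ℝ) (hΔw : Δw = Pd / Nd) (hΔr : Δr = Qd / Kd)
    (w₀ rr₀ : ℝ) (n l k d : ℤ) :
    ((1 / (Δw * Δr) : ℝ) : ℂ) *
        ∫ w : ℝ, ∫ r : ℝ,
          ((hat Δw (w₀ + l * Δw) w : ℝ) : ℂ) * ((hat Δr (rr₀ + d * Δr) r : ℝ) : ℂ) *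
            ghat σZ σR ρ lam κ b Pd Qd Δτ (w₀ + n * Δw - w) (rr₀ + k * Δr - r) =
      (1 / ((Pd : ℂ) * Qd)) *
        ∑' sz : ℤ × ℤ,
          Complex.exp (2 * (π : ℂ) * Complex.I * sz.1 * (n - l) / Nd) *
            Complex.exp (2 * (π : ℂ) * Complex.I * sz.2 * (k - d) / Kd) *
            ((tg Nd Kd sz.1 sz.2 : ℝ) : ℂ) *
            Gfun σZ σR ρ lam κ b Δτ (sz.1 / Pd) (sz.2 / Qd) := by
  subst hΔw hΔr
  rw [projected_weight_eq_fourier_series_general σZ σR ρ lam κ Pd Qd Δτ b hσZ.ne' hσR.ne' hρ hbint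
    hPd.ne' hQd.ne' hΔτ (by positivity) (by positivity)]
  simp only [fourierChar_grid_sub hPd.ne', fourierChar_grid_sub hQd.ne',
    tg_eq_sinc2_mul_grid hPd.ne' hQd.ne']

end
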